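/- For all a ∈ Q, the element Φ intertwines the two iterated coproducts: (Δ⊗id)(Δ(a)) · Φ = Φ · (id⊗Δ)(Δ(a)) in Q⊗Q⊗Q. -/

import Mathlib

open TensorProduct

set_option maxHeartbeats 1000000
set_option synthInstance.maxHeartbeats 400000

noncomputable section

/-- Generators of the restricted quantum group `Q = \bar U_i sl(2)`. -/
inductive QGen : Type
  | E | F | K | Kinv
deriving DecidableEq

/-- The free algebra on the generators. -/
abbrev FA : Type := FreeAlgebra ℂ QGen

def ιE : FA := FreeAlgebra.ι ℂ QGen.E
def ιF : FA := FreeAlgebra.ι ℂ QGen.F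
def ιK : FA := FreeAlgebra.ι ℂ QGen.K
def ιKi : FA := FreeAlgebra.ι ℂ QGen.Kinv

/-- Defining relations of `\bar U_i sl(2)` (at `q = i`, i.e. `p = 2`). -/
inductive QRel : FA → FA → Prop
  | KKi : QRel (ιK * ιKi) 1
  | KiK : QRel (ιKi * ιK) 1
  | KEKi : QRel (ιK * ιE * ιKi) (-ιE)
  | KFKi : QRel (ιK * ιF * ιKi) (-ιF)
  | EF : QRel (ιE * ιF - ιF * ιE) ((2 * Complex.I)⁻¹ • (ιK - ιKi))
  | Esq : QRel (ιE ^ 2) 0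
  | Fsq : QRel (ιF ^ 2) 0
  | K4 : QRel (ιK ^ 4) 1

/-- The restricted quantum group `\bar U_i sl(2)`: the quotient of the free algebra
by the two-sided ideal generated by the defining relations. -/
abbrev Q : Type := RingQuot QRel

def gE : Q := RingQuot.mkAlgHom ℂ QRel ιE
def gF : Q := RingQuot.mkAlgHom ℂ QRel ιF
def gK : Q := RingQuot.mkAlgHom ℂ QRel ιK
def gKi : Q := RingQuot.mkAlgHom ℂ QRel ιKi

section Gadgets

variable (k : Type) [Field k] (A : Type) [Ring A] [Algebra k A]

abbrev TP2 : Type := A ⊗[k] A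
abbrev TP3 : Type := A ⊗[k] (A ⊗[k] A)
abbrev TP4 : Type := A ⊗[k] (A ⊗[k] (A ⊗[k] A))

/-- Multiplication `a ⊗ b ↦ a * b`. -/
def mulA : TP2 k A →ₗ[k] A := LinearMap.mul' k A

/-- Tensor flip `a ⊗ b ↦ b ⊗ a`. -/
def flipA : TP2 k A →ₗ[k] TP2 k A := (TensorProduct.comm k A A).toLinearMap

/-- `a ↦ a ⊗ 1`. -/
def lTen : A →ₗ[k] TP2 k A := (TensorProduct.mk k A A).flip 1

/-- `a ↦ 1 ⊗ a`. -/
def rTen : A →ₗ[k] TP2 k A := TensorProduct.mk k A A 1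

/-- `a ⊗ b ↦ a ⊗ b ⊗ 1`. -/
def emb12 : TP2 k A →ₗ[k] TP3 k A := TensorProduct.map LinearMap.id (lTen k A)

/-- `a ⊗ b ↦ a ⊗ 1 ⊗ b`. -/
def emb13 : TP2 k A →ₗ[k] TP3 k A := TensorProduct.map LinearMap.id (rTen k A)

/-- `a ⊗ b ↦ 1 ⊗ a ⊗ b`. -/
def emb23 : TP2 k A →ₗ[k] TP3 k A := TensorProduct.mk k A (TP2 k A) 1

/-- `a ⊗ b ⊗ c ↦ a ⊗ c ⊗ b`. -/
def perm132 : TP3 k A →ₗ[k] TP3 k A := TensorProduct.map LinearMap.id (flipA k A)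

/-- `a ⊗ b ⊗ c ↦ b ⊗ c ⊗ a`. -/
def perm231 : TP3 k A →ₗ[k] TP3 k A :=
  (TensorProduct.assoc k A A A).toLinearMap ∘ₗ (TensorProduct.comm k A (TP2 k A)).toLinearMap

/-- `a ⊗ b ⊗ c ↦ c ⊗ a ⊗ b`. -/
def perm312 : TP3 k A →ₗ[k] TP3 k A :=
  (TensorProduct.comm k (TP2 k A) A).toLinearMap ∘ₗ (TensorProduct.assoc k A A A).symm.toLinearMap

/-- `a ⊗ b ⊗ c ↦ b ⊗ a ⊗ c`. -/
def perm213 : TP3 k A →ₗ[k] TP3 k A :=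
  (TensorProduct.assoc k A A A).toLinearMap ∘ₗ
    (TensorProduct.map (flipA k A) LinearMap.id) ∘ₗ (TensorProduct.assoc k A A A).symm.toLinearMap

variable {k A}

/-- `(Δ ⊗ id)` on two tensor factors, landing in the triple tensor product. -/
def copL (D : A →ₐ[k] TP2 k A) : TP2 k A →ₗ[k] TP3 k A :=
  (TensorProduct.assoc k A A A).toLinearMap ∘ₗ TensorProduct.map D.toLinearMap LinearMap.id

/-- `(id ⊗ Δ)` on two tensor factors. -/
def copR (D : A →ₐ[k] TP2 k A) : TP2 k A →ₗ[k] TP3 k A :=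
  TensorProduct.map LinearMap.id D.toLinearMap

/-- `(ε ⊗ id) : A ⊗ A → A`. -/
def cuL (ce : A →ₐ[k] k) : TP2 k A →ₗ[k] A :=
  (TensorProduct.lid k A).toLinearMap ∘ₗ TensorProduct.map ce.toLinearMap LinearMap.id

/-- `(id ⊗ ε) : A ⊗ A → A`. -/
def cuR (ce : A →ₐ[k] k) : TP2 k A →ₗ[k] A :=
  (TensorProduct.rid k A).toLinearMap ∘ₗ TensorProduct.map LinearMap.id ce.toLinearMap

/-- `(id ⊗ ε ⊗ id) : A ⊗ A ⊗ A → A ⊗ A`. -/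
def cuMid (ce : A →ₐ[k] k) : TP3 k A →ₗ[k] TP2 k A :=
  TensorProduct.map LinearMap.id (cuL ce)

/-- `(Δ ⊗ id ⊗ id)`. -/
def cop4_1 (D : A →ₐ[k] TP2 k A) : TP3 k A →ₗ[k] TP4 k A :=
  (TensorProduct.assoc k A A (TP2 k A)).toLinearMap ∘ₗ TensorProduct.map D.toLinearMap LinearMap.id

/-- `(id ⊗ Δ ⊗ id)`. -/
def cop4_2 (D : A →ₐ[k] TP2 k A) : TP3 k A →ₗ[k] TP4 k A :=
  TensorProduct.map LinearMap.id (copL D)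

/-- `(id ⊗ id ⊗ Δ)`. -/
def cop4_3 (D : A →ₐ[k] TP2 k A) : TP3 k A →ₗ[k] TP4 k A :=
  TensorProduct.map LinearMap.id (copR D)

/-- `a ⊗ b ⊗ c ↦ a ⊗ b ⊗ c ⊗ 1`, i.e. `Φ ↦ Φ ⊗ 1`. -/
def pad4 : TP3 k A →ₗ[k] TP4 k A :=
  TensorProduct.map LinearMap.id (TensorProduct.map LinearMap.id (lTen k A))

/-- `a ⊗ b ⊗ c ↦ f(a) * g(b) * h(c)`. -/
def tmap3 (f g h : A →ₗ[k] A) : TP3 k A →ₗ[k] A :=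
  mulA k A ∘ₗ TensorProduct.map f (mulA k A ∘ₗ TensorProduct.map g h)

/-- `a ⊗ b ↦ S(a) * b`, used in the antipode axiom `m ∘ (S ⊗ id) ∘ Δ = 1·ε`. -/
def antipL (s : A →ₗ[k] A) : TP2 k A →ₗ[k] A := mulA k A ∘ₗ TensorProduct.map s LinearMap.id

/-- `a ⊗ b ↦ a * S(b)`. -/
def antipR (s : A →ₗ[k] A) : TP2 k A →ₗ[k] A := mulA k A ∘ₗ TensorProduct.map LinearMap.id s

end Gadgets

/-- Central idempotent `e₀ = (1 + K²)/2`. -/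
def e0 : Q := (2:ℂ)⁻¹ • (1 + gK ^ 2)

/-- Central idempotent `e₁ = (1 − K²)/2`. -/
def e1 : Q := (2:ℂ)⁻¹ • (1 - gK ^ 2)

/-- `f⁺ = −i F`. -/
def fp : Q := (-Complex.I) • gF

/-- `f⁻ = E K⁻¹`. -/
def fm : Q := gE * gKi

/-- The Casimir element `C = FE − (i/4)(K − K⁻¹)`. -/
def Cas : Q := gF * gE - (Complex.I / 4) • (gK - gKi)

def t2 (a b : Q) : TP2 ℂ Q := a ⊗ₜ[ℂ] b

def t3 (a b c : Q) : TP3 ℂ Q := a ⊗ₜ[ℂ] (b ⊗ₜ[ℂ] c)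

def eEF : Q := gE * gF
def eEK : Q := gE * gK
def eFK : Q := gF * gK
def eEFK : Q := gE * gF * gK

/-- `Φ^{010}` component of the coassociator. -/
def Phi010 : TP3 ℂ Q :=
  t3 1 1 1 - (1 + Complex.I) • t3 gE gK gF + (1 - Complex.I) • t3 eFK gK eEK
    + (2:ℂ) • t3 eEFK 1 eEFK

/-- `Φ^{101}` component of the coassociator. -/
def Phi101 : TP3 ℂ Q :=
  (Complex.I - 1) • t3 1 gF eEK + t3 1 gK 1 + (2:ℂ) • t3 1 eEF eEFK
    - (1 + Complex.I) • t3 1 eEK gF - (1 + Complex.I) • t3 gE eFK 1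
    + (2 * Complex.I) • t3 gE eEFK gF + (1 - Complex.I) • t3 eFK gE 1
    - (2 * Complex.I) • t3 eFK eEFK eEK - (2:ℂ) • t3 eEFK eEF 1

/-- `Φ^{111}` component of the coassociator. -/
def Phi111 (β : ℂ) : TP3 ℂ Q :=
  (Complex.I * β ^ 2) • (
    (1 + Complex.I) • t3 1 gF eEK - t3 1 gK 1 - (2:ℂ) • t3 1 eEF 1
      - (2 * Complex.I) • t3 1 eEF eEFK + (1 + Complex.I) • t3 1 eEK gF
      - (1 + Complex.I) • t3 gE 1 gF + (1 + Complex.I) • t3 gE eFK 1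
      + (2 * Complex.I) • t3 gE eFK eEFK + (2:ℂ) • t3 gE eEFK gF
      - (1 + Complex.I) • t3 eFK 1 eEK + (1 + Complex.I) • t3 eFK gE 1
      + (2 * Complex.I) • t3 eFK gE eEFK + (2:ℂ) • t3 eFK eEFK eEK
      + (2 * Complex.I) • t3 eEFK gF eEK + (2 * Complex.I) • t3 eEFK gK eEFK
      - (2 * Complex.I) • t3 eEFK eEF 1 + (2 * Complex.I) • t3 eEFK eEK gF
      + (4:ℂ) • t3 eEFK eEF eEFK)

/-- The coassociator `Φ` of the quasi-Hopf algebra structure on `Q`. -/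
def Phi (β : ℂ) : TP3 ℂ Q :=
  t3 e0 e0 e0 + t3 e1 e0 e0 + Phi010 * t3 e0 e1 e0 + t3 e0 e0 e1
    + t3 e1 e1 e0 + Phi101 * t3 e1 e0 e1 + t3 e0 e1 e1 + Phi111 β * t3 e1 e1 e1

def R00 : TP2 ℂ Q :=
  (2:ℂ)⁻¹ • ((t2 1 1 + t2 1 gK + t2 gK 1 - t2 gK gK) * (t2 1 1 + (2 * Complex.I) • t2 gE gF))

def R01 : TP2 ℂ Q :=
  (2:ℂ)⁻¹ • ((t2 1 1 - Complex.I • t2 1 gK + t2 gK 1 + Complex.I • t2 gK gK) *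
    (t2 1 1 + (1 - Complex.I) • t2 eFK eEK - (1 - Complex.I) • t2 gE gF
      + (1 + Complex.I) • t2 eEFK 1 + (2 * Complex.I) • t2 eEFK eEFK))

def R10 : TP2 ℂ Q :=
  (2:ℂ)⁻¹ • ((t2 1 1 + t2 1 gK - Complex.I • t2 gK 1 + Complex.I • t2 gK gK) *
    (t2 1 gK + (1 - Complex.I) • t2 eFK gE + (1 - Complex.I) • t2 gE eFK
      - (1 - Complex.I) • t2 1 eEF - (2 * Complex.I) • t2 eEFK eEF))

def R11 (β : ℂ) : TP2 ℂ Q :=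
  (β / 2) • ((t2 1 1 - Complex.I • t2 1 gK - Complex.I • t2 gK 1 + t2 gK gK) *
    ((-Complex.I) • t2 gK 1 + (2 * Complex.I) • t2 eEK gF + (1 - Complex.I) • t2 gK eEFK
      - (1 + Complex.I) • t2 eEF 1 - (2 * Complex.I) • t2 eEF eEFK))

/-- The universal R-matrix `R` of the quasi-triangular quasi-Hopf structure on `Q`. -/
def Rmat (β : ℂ) : TP2 ℂ Q :=
  R00 * t2 e0 e0 + R01 * t2 e0 e1 + R10 * t2 e1 e0 + R11 β * t2 e1 e1

/-- The standard R-matrix `R_st` of the quotient `Q/(K²-1)`. -/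
def Rst : TP2 ℂ Q :=
  (2:ℂ)⁻¹ • ∑ m ∈ Finset.range 2, ∑ n ∈ Finset.range 2,
    ((-1:ℂ) ^ (m * n)) • (t2 (gK ^ m) (gK ^ n) * (t2 1 1 + (2 * Complex.I) • t2 gE gF))

/-- The monodromy matrix `M = R₂₁ · R`. -/
def Mmat (β : ℂ) : TP2 ℂ Q := flipA ℂ Q (Rmat β) * Rmat β

/-- The ribbon element `v = (e₀ − iβ K e₁)(1 − 2 f⁺ f⁻)`. -/
def vRib (β : ℂ) : Q := (e0 - (Complex.I * β) • (gK * e1)) * (1 - (2:ℂ) • (fp * fm))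

/-- The coevaluation element `β = e₀ − 2iβ² C e₁`. -/
def bbEl (β : ℂ) : Q := e0 - (2 * Complex.I * β ^ 2) • (Cas * e1)

/-- `b ⊗ c ↦ S(b · bb · S(c))`, inner part of the Drinfeld element. -/
def uInner (S : Q →ₗ[ℂ] Q) (bb : Q) : TP2 ℂ Q →ₗ[ℂ] Q :=
  S ∘ₗ mulA ℂ Q ∘ₗ TensorProduct.map (LinearMap.mulRight ℂ bb) S

/-- `Φ' ⊗ Φ'' ⊗ Φ''' ↦ S(Φ'' · bb · S(Φ''')) ⊗ Φ'`. -/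
def uMap1 (S : Q →ₗ[ℂ] Q) (bb : Q) : TP3 ℂ Q →ₗ[ℂ] TP2 ℂ Q :=
  TensorProduct.map (uInner S bb) LinearMap.id ∘ₗ (TensorProduct.comm ℂ Q (TP2 ℂ Q)).toLinearMap

/-- `R' ⊗ R'' ↦ S(R'') · al · R'`. -/
def uMap2 (S : Q →ₗ[ℂ] Q) (al : Q) : TP2 ℂ Q →ₗ[ℂ] Q :=
  mulA ℂ Q ∘ₗ TensorProduct.map (LinearMap.mulRight ℂ al ∘ₗ S) LinearMap.id ∘ₗ
    (TensorProduct.comm ℂ Q Q).toLinearMap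

/-- `(x ⊗ a) ⊗ (R' ⊗ R'') ↦ x · (S(R'') · al · R') · a`. -/
def uBig (S : Q →ₗ[ℂ] Q) (al : Q) : TP2 ℂ Q ⊗[ℂ] TP2 ℂ Q →ₗ[ℂ] Q :=
  mulA ℂ Q ∘ₗ TensorProduct.map LinearMap.id (mulA ℂ Q ∘ₗ (TensorProduct.comm ℂ Q Q).toLinearMap)
    ∘ₗ (TensorProduct.assoc ℂ Q Q Q).toLinearMap ∘ₗ TensorProduct.map LinearMap.id (uMap2 S al)

/-- The Drinfeld element `u = Σ S(Φ''·b·S(Φ'''))·S(R'')·α·R'·Φ'` (with `α = 1`). -/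
def uDrin (β : ℂ) (S : Q →ₗ[ℂ] Q) : Q :=
  uBig S 1 (uMap1 S (bbEl β) (Phi β) ⊗ₜ[ℂ] Rmat β)

/-- The balancing element `g = b · S(α) · v⁻¹ · u` (with `α = 1`). -/
def balG (β : ℂ) (S : Q →ₗ[ℂ] Q) : Q :=
  bbEl β * S 1 * Ring.inverse (vRib β) * uDrin β S

/-- The cointegral `c = (β²/i)·E·F·(1 + K + K² + K³)`. -/
def cInt (β : ℂ) : Q := (β ^ 2 / Complex.I) • (gE * gF * (1 + gK + gK ^ 2 + gK ^ 3))

/-- The q-trace of a one-dimensional representation, with balancing element `K⁻¹`. -/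
def qTr1 (ρ : Q →ₐ[ℂ] ℂ) : Q →ₗ[ℂ] ℂ := ρ.toLinearMap ∘ₗ LinearMap.mulLeft ℂ gK

/-- The q-trace of a two-dimensional (matrix) representation, with balancing element `K⁻¹`. -/
def qTrM (ρ : Q →ₐ[ℂ] Matrix (Fin 2) (Fin 2) ℂ) : Q →ₗ[ℂ] ℂ :=
  Matrix.traceLinearMap (Fin 2) ℂ ℂ ∘ₗ ρ.toLinearMap ∘ₗ LinearMap.mulLeft ℂ gK

/-- The Drinfeld mapping `φ ↦ (φ ⊗ id)(M)`. -/
def drinfeldImg (β : ℂ) (φ : Q →ₗ[ℂ] ℂ) : Q :=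
  (TensorProduct.lid ℂ Q) (TensorProduct.map φ LinearMap.id (Mmat β))

theorem gen_comm {A M : Type*} [Ring A] [Algebra ℂ A] [Ring M] [Algebra ℂ M]
    (E F K L z w : A) (T : A → A → A → M)
    (hT : ∀ a b c a' b' c', T a b c * T a' b' c' = T (a * a') (b * b') (c * c'))
    (a1 : ∀ x y b c, T (x + y) b c = T x b c + T y b c)
    (a2 : ∀ x y b c, T b (x + y) c = T b x c + T b y c)
    (a3 : ∀ x y b c, T b c (x + y) = T b c x + T b c y)
    (s1 : ∀ (r : ℂ) x b c, T (r • x) b c = r • T x b c)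
    (s2 : ∀ (r : ℂ) x b c, T b (r • x) c = r • T b x c)
    (s3 : ∀ (r : ℂ) x b c, T b c (r • x) = r • T b c x)
    (hKE : ∀ x, K * (E * x) = (-1 : ℂ) • (E * (K * x)))
    (hKF : ∀ x, K * (F * x) = (-1 : ℂ) • (F * (K * x)))
    (hEE : ∀ x, E * (E * x) = (0 : ℂ) • x)
    (hFF : ∀ x, F * (F * x) = (0 : ℂ) • x)
    (hL : ∀ x, L * x = K * (K * (K * x)))
    (hFE : ∀ x, F * (E * x) = E * (F * x) + ((Complex.I / 2) • (K * x)
      + (-(Complex.I / 2)) • (K * (K * (K * x)))))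
    (hz : K * (K * z) = z) (hw : K * (K * w) = (-1 : ℂ) • w)
    (X : M) (hX : X = T 1 1 E + (T 1 E K + T E K K) ∨ X = T L L F + (T L F 1 + T F 1 1)
      ∨ X = T K K K) :
    (∀ P, P = T 1 1 1 - (1 + Complex.I) • T E K F + (1 - Complex.I) • T (F * K) K (E * K)
    + (2:ℂ) • T (E * F * K) 1 (E * F * K) → X * (P * T z w z) = P * (X * T z w z)) ∧
    (∀ P, P = (Complex.I - 1) • T 1 F (E * K) + T 1 K 1 + (2:ℂ) • T 1 (E * F) (E * F * K)
    - (1 + Complex.I) • T 1 (E * K) F - (1 + Complex.I) • T E (F * K) 1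
    + (2 * Complex.I) • T E (E * F * K) F + (1 - Complex.I) • T (F * K) E 1
    - (2 * Complex.I) • T (F * K) (E * F * K) (E * K) - (2:ℂ) • T (E * F * K) (E * F) 1
      → X * (P * T w z w) = P * (X * T w z w)) ∧
    (∀ P, P = (1 + Complex.I) • T 1 F (E * K) - T 1 K 1 - (2:ℂ) • T 1 (E * F) 1
      - (2 * Complex.I) • T 1 (E * F) (E * F * K) + (1 + Complex.I) • T 1 (E * K) F
      - (1 + Complex.I) • T E 1 F + (1 + Complex.I) • T E (F * K) 1
      + (2 * Complex.I) • T E (F * K) (E * F * K) + (2:ℂ) • T E (E * F * K) F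
      - (1 + Complex.I) • T (F * K) 1 (E * K) + (1 + Complex.I) • T (F * K) E 1
      + (2 * Complex.I) • T (F * K) E (E * F * K) + (2:ℂ) • T (F * K) (E * F * K) (E * K)
      + (2 * Complex.I) • T (E * F * K) F (E * K) + (2 * Complex.I) • T (E * F * K) K (E * F * K)
      - (2 * Complex.I) • T (E * F * K) (E * F) 1 + (2 * Complex.I) • T (E * F * K) (E * K) F
      + (4:ℂ) • T (E * F * K) (E * F) (E * F * K) → X * (P * T w w w) = P * (X * T w w w)) := by
  have hI : Complex.I ^ 2 = -1 := Complex.I_sq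
  rcases hX with rfl | rfl | rfl <;> refine ⟨?_, ?_, ?_⟩ <;> rintro P rfl <;>
  · simp only [mul_add, add_mul, mul_sub, sub_mul, hT, smul_mul_assoc, mul_smul_comm, mul_assoc,
      one_mul, hL, hKE, hKF, hEE, hFF, hFE, hz, hw, a1, a2, a3, s1, s2, s3, smul_add, smul_sub,
      smul_smul]
    match_scalars <;> clear * - hI <;> grind

theorem rel_mk {x y : FA} (h : QRel x y) :
    RingQuot.mkAlgHom ℂ QRel x = RingQuot.mkAlgHom ℂ QRel y :=
  RingQuot.mkAlgHom_rel ℂ h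

theorem r_KKi : gK * gKi = 1 := by
  have := rel_mk QRel.KKi
  simp only [map_mul, map_one] at this
  exact this

theorem r_KiK : gKi * gK = 1 := by
  have := rel_mk QRel.KiK
  simp only [map_mul, map_one] at this
  exact this

theorem r_KE : gK * gE = (-1 : ℂ) • (gE * gK) := by
  have h : gK * gE * gKi = (-1 : ℂ) • gE := by
    have := rel_mk QRel.KEKi
    have e : -ιE = (-1 : ℂ) • ιE := (neg_one_smul ℂ ιE).symm
    rw [e] at this
    simp only [map_mul, map_smul] at this
    exact this
  calc gK * gE = gK * gE * gKi * gK := by rw [mul_assoc _ gKi, r_KiK, mul_one]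
    _ = _ := by rw [h, smul_mul_assoc]

theorem r_KF : gK * gF = (-1 : ℂ) • (gF * gK) := by
  have h : gK * gF * gKi = (-1 : ℂ) • gF := by
    have := rel_mk QRel.KFKi
    have e : -ιF = (-1 : ℂ) • ιF := (neg_one_smul ℂ ιF).symm
    rw [e] at this
    simp only [map_mul, map_smul] at this
    exact this
  calc gK * gF = gK * gF * gKi * gK := by rw [mul_assoc _ gKi, r_KiK, mul_one]
    _ = _ := by rw [h, smul_mul_assoc]

theorem r_EF : gE * gF - gF * gE = (2 * Complex.I)⁻¹ • (gK - gKi) := by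
  have := rel_mk QRel.EF
  simp only [map_mul, map_sub, map_smul] at this
  exact this

theorem r_EE : gE * gE = 0 := by
  have := rel_mk QRel.Esq
  simp only [map_mul, map_zero, pow_two] at this
  exact this

theorem r_FF : gF * gF = 0 := by
  have := rel_mk QRel.Fsq
  simp only [map_mul, map_zero, pow_two] at this
  exact this

theorem r_K4 : gK * (gK * (gK * gK)) = 1 := by
  have h : gK ^ 4 = 1 := by
    have := rel_mk QRel.K4
    simp only [map_pow, map_one] at this
    exact this
  rw [← h]; noncomm_ring

theorem r_Ki : gKi = gK * (gK * gK) := by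
  calc gKi = gKi * (gK * (gK * (gK * gK))) := by rw [r_K4, mul_one]
    _ = (gKi * gK) * (gK * (gK * gK)) := by rw [mul_assoc]
    _ = _ := by rw [r_KiK, one_mul]

theorem r_FE : gF * gE = gE * gF + ((Complex.I / 2) • gK
      + (-(Complex.I / 2)) • (gK * (gK * gK))) := by
  have h := r_EF
  rw [r_Ki] at h
  have h2 : (2 * Complex.I)⁻¹ = -(Complex.I / 2) := by
    rw [mul_inv, Complex.inv_I]; ring
  rw [h2] at h
  have h3 : gF * gE = gE * gF - (gE * gF - gF * gE) := by abel
  rw [h3, h]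
  module

theorem K2E : Commute (gK ^ 2) gE := by
  show _ = _
  rw [pow_two, mul_assoc, r_KE, mul_smul_comm, ← mul_assoc, r_KE, smul_mul_assoc, smul_smul,
    mul_assoc, neg_one_mul, neg_neg, one_smul]

theorem K2F : Commute (gK ^ 2) gF := by
  show _ = _
  rw [pow_two, mul_assoc, r_KF, mul_smul_comm, ← mul_assoc, r_KF, smul_mul_assoc, smul_smul,
    mul_assoc, neg_one_mul, neg_neg, one_smul]

theorem K2K : Commute (gK ^ 2) gK := (Commute.refl gK).pow_left 2

theorem e0_comm {x : Q} (h : Commute (gK ^ 2) x) : Commute e0 x :=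
  ((Commute.one_left x).add_left h).smul_left _

theorem e1_comm {x : Q} (h : Commute (gK ^ 2) x) : Commute e1 x :=
  ((Commute.one_left x).sub_left h).smul_left _

theorem KKe0 : gK * (gK * e0) = e0 := by
  have h : gK * (gK * gK ^ 2) = 1 := by rw [pow_two]; exact r_K4
  simp only [e0, mul_smul_comm, mul_add, h, mul_one]
  rw [pow_two, add_comm]

theorem KKe1 : gK * (gK * e1) = (-1 : ℂ) • e1 := by
  have h : gK * (gK * gK ^ 2) = 1 := by rw [pow_two]; exact r_K4
  simp only [e1, mul_smul_comm, mul_sub, h, mul_one]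
  rw [pow_two]
  module

theorem t3_mul (a b c a' b' c' : Q) :
    t3 a b c * t3 a' b' c' = t3 (a * a') (b * b') (c * c') := by
  simp only [t3, Algebra.TensorProduct.tmul_mul_tmul]

theorem t3_comm {a b c a' b' c' : Q} (h1 : Commute a a') (h2 : Commute b b')
    (h3 : Commute c c') : Commute (t3 a b c) (t3 a' b' c') := by
  show _ = _
  rw [t3_mul, t3_mul, h1.eq, h2.eq, h3.eq]

/-- `Φ` commutes with the iterated coproducts of the generators. -/
theorem Phi_comm (β : ℂ) (X : TP3 ℂ Q)
    (hX : X = t3 1 1 gE + (t3 1 gE gK + t3 gE gK gK) ∨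
      X = t3 gKi gKi gF + (t3 gKi gF 1 + t3 gF 1 1) ∨ X = t3 gK gK gK) :
    X * Phi β = Phi β * X := by
  obtain ⟨g1, g2, g3⟩ := gen_comm gE gF gK gKi e0 e1 t3 t3_mul
    (fun x y b c => by simp only [t3, TensorProduct.add_tmul])
    (fun x y b c => by simp only [t3, TensorProduct.add_tmul, TensorProduct.tmul_add])
    (fun x y b c => by simp only [t3, TensorProduct.tmul_add])
    (fun r x b c => by simp only [t3, TensorProduct.smul_tmul'])
    (fun r x b c => by
      simp only [t3, ← TensorProduct.smul_tmul', TensorProduct.tmul_smul])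
    (fun r x b c => by simp only [t3, TensorProduct.tmul_smul])
    (fun x => by rw [← mul_assoc, r_KE, smul_mul_assoc, mul_assoc])
    (fun x => by rw [← mul_assoc, r_KF, smul_mul_assoc, mul_assoc])
    (fun x => by rw [← mul_assoc, r_EE, zero_mul, zero_smul])
    (fun x => by rw [← mul_assoc, r_FF, zero_mul, zero_smul])
    (fun x => by rw [r_Ki, mul_assoc, mul_assoc])
    (fun x => by
      rw [← mul_assoc, r_FE]
      simp only [add_mul, smul_mul_assoc, mul_assoc])
    KKe0 KKe1 X hX
  have hKi : Commute (gK ^ 2) gKi := by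
    rw [r_Ki]; exact K2K.mul_right (K2K.mul_right K2K)
  have key : ∀ p q r : Q, (∀ x, Commute (gK ^ 2) x → Commute p x) →
      (∀ x, Commute (gK ^ 2) x → Commute q x) → (∀ x, Commute (gK ^ 2) x → Commute r x) →
      Commute X (t3 p q r) := by
    intro p q r hp hq hr
    have h1 : Commute (gK ^ 2) (1 : Q) := Commute.one_right _
    have hh : ∀ {a b c : Q}, Commute (gK ^ 2) a → Commute (gK ^ 2) b → Commute (gK ^ 2) c →
        Commute (t3 a b c) (t3 p q r) := fun ha hb hc =>
      (t3_comm (hp _ ha) (hq _ hb) (hr _ hc)).symm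
    rcases hX with rfl | rfl | rfl
    · exact (hh h1 h1 K2E).add_left ((hh h1 K2E K2K).add_left (hh K2E K2K K2K))
    · exact (hh hKi hKi K2F).add_left ((hh hKi K2F h1).add_left (hh K2F h1 h1))
    · exact hh K2K K2K K2K
  have c0 : ∀ x, Commute (gK ^ 2) x → Commute e0 x := fun x h => e0_comm h
  have c1 : ∀ x, Commute (gK ^ 2) x → Commute e1 x := fun x h => e1_comm h
  have k010 : Commute X (Phi010 * t3 e0 e1 e0) := by
    show _ = _
    rw [g1 Phi010 rfl, (key _ _ _ c0 c1 c0).eq, mul_assoc]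
  have k101 : Commute X (Phi101 * t3 e1 e0 e1) := by
    show _ = _
    rw [g2 Phi101 rfl, (key _ _ _ c1 c0 c1).eq, mul_assoc]
  have k111 : Commute X (Phi111 β * t3 e1 e1 e1) := by
    show _ = _
    unfold Phi111
    rw [smul_mul_assoc, mul_smul_comm, smul_mul_assoc]
    congr 1
    have := g3 _ rfl
    rw [(key _ _ _ c1 c1 c1).eq] at this
    exact this.trans (mul_assoc _ _ _).symm
  exact (((((((key _ _ _ c0 c0 c0).add_right (key _ _ _ c1 c0 c0)).add_right k010).add_right
    (key _ _ _ c0 c0 c1)).add_right (key _ _ _ c1 c1 c0)).add_right k101).add_right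
    (key _ _ _ c0 c1 c1)).add_right k111

/-- `copL` as an algebra homomorphism. -/
def copLAlg (D : Q →ₐ[ℂ] TP2 ℂ Q) : TP2 ℂ Q →ₐ[ℂ] TP3 ℂ Q :=
  (Algebra.TensorProduct.assoc ℂ ℂ ℂ Q Q Q).toAlgHom.comp
    (Algebra.TensorProduct.map D (AlgHom.id ℂ Q))

/-- `copR` as an algebra homomorphism. -/
def copRAlg (D : Q →ₐ[ℂ] TP2 ℂ Q) : TP2 ℂ Q →ₐ[ℂ] TP3 ℂ Q :=
  Algebra.TensorProduct.map (AlgHom.id ℂ Q) D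

theorem copL_eq (D : Q →ₐ[ℂ] TP2 ℂ Q) (x : TP2 ℂ Q) : copL D x = copLAlg D x := rfl

theorem copR_eq (D : Q →ₐ[ℂ] TP2 ℂ Q) (x : TP2 ℂ Q) : copR D x = copRAlg D x := rfl

theorem copL_tmul (D : Q →ₐ[ℂ] TP2 ℂ Q) (x y : Q) :
    copL D (x ⊗ₜ[ℂ] y) = TensorProduct.assoc ℂ Q Q Q (D x ⊗ₜ[ℂ] y) := rfl

theorem copR_tmul (D : Q →ₐ[ℂ] TP2 ℂ Q) (x y : Q) :
    copR D (x ⊗ₜ[ℂ] y) = x ⊗ₜ[ℂ] D y := rfl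

/-- Induction principle: a property closed under the algebra operations. -/
theorem Q_ind (S : Subalgebra ℂ Q) (hE : gE ∈ S) (hF : gF ∈ S) (hK : gK ∈ S) (hKi : gKi ∈ S)
    (a : Q) : a ∈ S := by
  obtain ⟨x, rfl⟩ := RingQuot.mkAlgHom_surjective ℂ QRel a
  induction x using FreeAlgebra.induction with
  | grade0 r => rw [AlgHom.commutes]; exact S.algebraMap_mem r
  | grade1 g => cases g <;> assumption
  | mul x y hx hy => rw [map_mul]; exact S.mul_mem hx hy
  | add x y hx hy => rw [map_add]; exact S.add_mem hx hy

/-- The intertwined elements form a subalgebra. -/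
def intSub {M : Type} [Ring M] [Algebra ℂ M] (f g : Q →ₐ[ℂ] M) (P : M) : Subalgebra ℂ Q where
  carrier := {a | f a * P = P * g a}
  mul_mem' := by
    intro a b (ha : _ = _) (hb : _ = _)
    show _ = _
    rw [map_mul, map_mul, mul_assoc, hb, ← mul_assoc, ha, mul_assoc]
  add_mem' := by
    intro a b (ha : _ = _) (hb : _ = _)
    show _ = _
    rw [map_add, map_add, add_mul, mul_add, ha, hb]
  algebraMap_mem' := by
    intro r
    show _ = _
    rw [AlgHom.commutes, AlgHom.commutes]
    exact Algebra.commutes r P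

/-- the coassociator `Φ` intertwines the two iterated coproducts:
`(Δ⊗id)(Δ(a)) · Φ = Φ · (id⊗Δ)(Δ(a))` for all `a ∈ Q`. -/
theorem statement7 (β : ℂ) (hβ : β ^ 4 = -1)
    (Δ : Q →ₐ[ℂ] TP2 ℂ Q)
    (hΔE : Δ gE = (1:Q) ⊗ₜ[ℂ] gE + gE ⊗ₜ[ℂ] gK)
    (hΔF : Δ gF = gKi ⊗ₜ[ℂ] gF + gF ⊗ₜ[ℂ] (1:Q))
    (hΔK : Δ gK = gK ⊗ₜ[ℂ] gK) :
    ∀ a : Q, copL Δ (Δ a) * Phi β = Phi β * copR Δ (Δ a) := by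
  have hΔKi : Δ gKi = gKi ⊗ₜ[ℂ] gKi := by
    rw [r_Ki, map_mul, map_mul, hΔK]
    simp only [Algebra.TensorProduct.tmul_mul_tmul]
  have h1 : Δ 1 = (1 : Q) ⊗ₜ[ℂ] (1 : Q) := map_one Δ
  have main : ∀ a X, (X = t3 1 1 gE + (t3 1 gE gK + t3 gE gK gK) ∨
      X = t3 gKi gKi gF + (t3 gKi gF 1 + t3 gF 1 1) ∨ X = t3 gK gK gK) →
      copL Δ (Δ a) = X → copR Δ (Δ a) = X →
      a ∈ intSub ((copLAlg Δ).comp Δ) ((copRAlg Δ).comp Δ) (Phi β) := by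
    intro a X hX hl hr
    show copL Δ (Δ a) * Phi β = Phi β * copR Δ (Δ a)
    rw [hl, hr]
    exact Phi_comm β X hX
  have hK : gK ∈ intSub ((copLAlg Δ).comp Δ) ((copRAlg Δ).comp Δ) (Phi β) := by
    refine main _ _ (Or.inr (Or.inr rfl)) ?_ ?_
    · rw [hΔK, copL_tmul, hΔK]; rfl
    · rw [hΔK, copR_tmul, hΔK]; rfl
  intro a
  refine Q_ind (intSub ((copLAlg Δ).comp Δ) ((copRAlg Δ).comp Δ) (Phi β)) ?_ ?_ hK ?_ a
  · refine main _ _ (Or.inl rfl) ?_ ?_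
    · rw [hΔE, map_add, copL_tmul, copL_tmul, hΔE, h1, TensorProduct.add_tmul, map_add]
      rfl
    · rw [hΔE, map_add, copR_tmul, copR_tmul, hΔE, hΔK, TensorProduct.tmul_add, add_assoc]
      rfl
  · refine main _ _ (Or.inr (Or.inl rfl)) ?_ ?_
    · rw [hΔF, map_add, copL_tmul, copL_tmul, hΔF, hΔKi, TensorProduct.add_tmul, map_add]
      rfl
    · rw [hΔF, map_add, copR_tmul, copR_tmul, hΔF, h1, TensorProduct.tmul_add, add_assoc]
      rfl
  · rw [r_Ki]
    exact Subalgebra.mul_mem _ hK (Subalgebra.mul_mem _ hK hK)
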